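/- Let G be a digraph on N and let i ≠ j be two nodes lying in the same strongly connected component of G with ij ∉ G and ji ∉ G. Then for any utility parameters (γ,H,c), u_i(G + ij) − u_i(G) = γ > 0, and u_j(G + ij) − u_j(G) = −c/|P_j(G + ij, i)| < 0; in particular, i has an incentive to establish the edge ij, while a consensual agent j does not consent to it. -/

import Mathlib

/-!
Adding an edge `ij` inside a strongly connected component changes neither reachability
(the new edge can be replaced by an existing path from `i` to `j`) nor, therefore, the
strongly connected components. The condensation keeps its arcs as well, since the new edge has both
ends in one component, so all levels are unchanged (`level_insert`). The utilities then
differ only in their local terms. Agent `i` gains the out-neighbour `j`; because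
`ji ∉ G`, the set `N_in^s(i)` and the sets `P_i(·, k)` are the same as before. Agent `j`
keeps its out-neighbours and gains exactly one subordinate, `i`, while the sets
`P_j(·, k)` of its previous subordinates do not change, again because `ji ∉ G`.
-/

open Finset MeasureTheory ProbabilityTheory

attribute [local instance 10] Classical.propDecidable

noncomputable section

/-- A digraph on the agent set `Fin n`: a finite set of ordered pairs (directed edges). -/
abbrev Network (n : ℕ) := Finset (Fin n × Fin n)

variable {n : ℕ}

/-- Edges only join distinct nodes. -/
def validNetwork (G : Network n) : Prop := ∀ p ∈ G, p.1 ≠ p.2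

/-- Out-neighborhood `N_out(i,G)`. -/
def Nout (G : Network n) (i : Fin n) : Finset (Fin n) := univ.filter fun j => (i, j) ∈ G

/-- The set of subordinates `N_in^s(i,G)`. -/
def NinS (G : Network n) (i : Fin n) : Finset (Fin n) :=
  univ.filter fun j => (j, i) ∈ G ∧ (i, j) ∉ G

/-- `P_i(G,k) = {i} ∪ {j : kj ∈ G and ij, ji ∈ G}`. -/
def Pset (G : Network n) (i k : Fin n) : Finset (Fin n) :=
  insert i (univ.filter fun j => (k, j) ∈ G ∧ (i, j) ∈ G ∧ (j, i) ∈ G)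

/-- `P_i(G) = ⋂_{k ∈ N_in^s(i,G)} P_i(G,k)`. -/
def Pall (G : Network n) (i : Fin n) : Finset (Fin n) :=
  univ.filter fun j => ∀ k ∈ NinS G i, j ∈ Pset G i k

/-- Reachability along directed edges. -/
def reach (G : Network n) : Fin n → Fin n → Prop :=
  Relation.ReflTransGen fun a b => (a, b) ∈ G

/-- `i` and `j` belong to the same strongly connected component. -/
def sameSCC (G : Network n) (i j : Fin n) : Prop := reach G i j ∧ reach G j i

/-- The strongly connected component `Γ(i,G)` of `i`. -/
def sccSet (G : Network n) (i : Fin n) : Finset (Fin n) := univ.filter fun j => sameSCC G i j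

/-- An arc of the condensation `C(G)`, between the SCC of `a` and the SCC of `b`. -/
def condArc (G : Network n) (a b : Fin n) : Prop :=
  ¬ sameSCC G a b ∧ ∃ a' b' : Fin n, sameSCC G a a' ∧ sameSCC G b b' ∧ (a', b') ∈ G

/-- The SCC of `a` is a source of the condensation `C(G)`. -/
def isSourceSCC (G : Network n) (a : Fin n) : Prop := ∀ b, ¬ condArc G b a

/-- The level `ℓ_i(C(G))`: the largest number of arcs on a directed path in the
condensation `C(G)` from a source of `C(G)` to the SCC of `i`. -/
def level (G : Network n) (i : Fin n) : ℕ :=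
  sSup {m : ℕ | ∃ f : ℕ → Fin n, isSourceSCC G (f 0) ∧ sameSCC G (f m) i ∧
    ∀ t, t < m → condArc G (f t) (f (t + 1))}

/-- The utility `u_i(G)` of agent `i` in the network `G`. -/
def utility (γ c : ℝ) (H : ℕ → ℝ) (G : Network n) (i : Fin n) : ℝ :=
  ((Nout G i).card : ℝ) * γ + H (level G i)
    - c * ∑ k ∈ NinS G i, (1 : ℝ) / ((Pset G i k).card : ℝ)

/-- Utility parameters: `γ > 0`, `c > 0`, `H` strictly increasing with `H 0 ≥ 0`. -/
def UtilityParams (γ c : ℝ) (H : ℕ → ℝ) : Prop :=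
  0 < γ ∧ 0 < c ∧ StrictMono H ∧ 0 ≤ H 0

/-- Equilibrium network for non-consensual agents. -/
def eqNonConsensual (γ c : ℝ) (H : ℕ → ℝ) (G : Network n) : Prop :=
  ∀ i j : Fin n, i ≠ j →
    ((i, j) ∈ G → utility γ c H (G.erase (i, j)) i < utility γ c H G i) ∧
    ((i, j) ∉ G → utility γ c H (insert (i, j) G) i < utility γ c H G i)

/-- Equilibrium network for consensual agents. -/
def eqConsensual (γ c : ℝ) (H : ℕ → ℝ) (G : Network n) : Prop :=
  ∀ i j : Fin n, i ≠ j →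
    ((i, j) ∈ G → utility γ c H (G.erase (i, j)) i < utility γ c H G i) ∧
    ((i, j) ∉ G →
      utility γ c H (insert (i, j) G) i < utility γ c H G i ∨
        (utility γ c H G i ≤ utility γ c H (insert (i, j) G) i ∧
          utility γ c H (insert (i, j) G) j < utility γ c H G j))

/-- `G` has no directed cycles: every edge joining two nodes of the same SCC
is an undirected edge. -/
def noDirectedCycles (G : Network n) : Prop :=
  ∀ i j : Fin n, (i, j) ∈ G → sameSCC G i j → (j, i) ∈ G

/-- Reachability forgetting edge directions. -/
def weakReach (G : Network n) : Fin n → Fin n → Prop :=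
  Relation.ReflTransGen fun a b => (a, b) ∈ G ∨ (b, a) ∈ G

/-- `G` is weakly connected. -/
def weaklyConnected (G : Network n) : Prop := ∀ i j : Fin n, weakReach G i j

/-- Every SCC of `G` is a complete connected component: any two distinct nodes of
the same SCC are joined by an undirected edge. -/
def completeSCCs (G : Network n) : Prop :=
  ∀ i j : Fin n, i ≠ j → sameSCC G i j → (i, j) ∈ G ∧ (j, i) ∈ G

/-- The undirected edge `ij, ji ∈ G` is critical: `Γ(i,G) ≠ Γ(i, G - ij)`. -/
def criticalEdge (G : Network n) (i j : Fin n) : Prop :=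
  (i, j) ∈ G ∧ (j, i) ∈ G ∧
    {k : Fin n | sameSCC G i k} ≠ {k : Fin n | sameSCC (G.erase (i, j)) i k}

/-- `L_ℓ(G) = |{j : ℓ_j(C(G)) < ℓ}|`. -/
def Lcard (G : Network n) (ℓ : ℕ) : ℕ :=
  (univ.filter fun j : Fin n => level G j < ℓ).card

/-- `G` is a sequential hierarchy: weakly connected, no directed cycles, exactly one
SCC per level, and (if more than one level) every node has a single edge towards
every node of strictly higher level. -/
def seqHierarchy (G : Network n) : Prop :=
  weaklyConnected G ∧ noDirectedCycles G ∧
  (∀ i j : Fin n, level G i = level G j → sameSCC G i j) ∧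
  ((∃ i j : Fin n, level G i ≠ level G j) →
    ∀ i j : Fin n, level G i < level G j → (i, j) ∈ G ∧ (j, i) ∉ G)

/-- The better-response update of `G` at the ordered pair `p = (i,j)`. -/
def brUpdate (consensual : Bool) (γ c : ℝ) (H : ℕ → ℝ) (G : Network n)
    (p : Fin n × Fin n) : Network n :=
  if p ∈ G then
    if utility γ c H G p.1 ≤ utility γ c H (G.erase p) p.1 then G.erase p else G
  else if consensual then
    if utility γ c H G p.1 ≤ utility γ c H (insert p G) p.1 ∧
        utility γ c H G p.2 ≤ utility γ c H (insert p G) p.2 then insert p G else G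
  else
    if utility γ c H G p.1 ≤ utility γ c H (insert p G) p.1 then insert p G else G

/-- Equilibrium network for the given agent type. -/
def equilibrium (consensual : Bool) (γ c : ℝ) (H : ℕ → ℝ) (G : Network n) : Prop :=
  if consensual then eqConsensual γ c H G else eqNonConsensual γ c H G


theorem reach_insert {n : ℕ} {G : Network n} {i j : Fin n} (h : reach G i j) (a b : Fin n) :
    reach (insert (i, j) G) a b ↔ reach G a b := by
  constructor
  · intro hab
    induction hab with
    | refl => exact Relation.ReflTransGen.refl
    | tail _ hbc ih =>
      rcases Finset.mem_insert.mp hbc with heq | hmem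
      · obtain ⟨rfl, rfl⟩ := Prod.mk.inj heq
        exact ih.trans h
      · exact ih.tail hmem
  · intro hab
    exact Relation.ReflTransGen.mono (fun x y (hxy : (x, y) ∈ G) =>
      (Finset.mem_insert_of_mem hxy : (x, y) ∈ insert (i, j) G)) _ _ hab

theorem sameSCC_insert {n : ℕ} {G : Network n} {i j : Fin n} (h : reach G i j) (a b : Fin n) :
    sameSCC (insert (i, j) G) a b ↔ sameSCC G a b := by
  simp only [sameSCC, reach_insert h]

theorem condArc_insert {n : ℕ} {G : Network n} {i j : Fin n} (h : sameSCC G i j)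
    (a b : Fin n) : condArc (insert (i, j) G) a b ↔ condArc G a b := by
  simp only [condArc, sameSCC_insert h.1]
  refine and_congr_right fun hab => ?_
  constructor
  · rintro ⟨a', b', ha, hb, hmem⟩
    rcases Finset.mem_insert.mp hmem with heq | hmem
    · -- The new edge cannot witness an arc: it would put `a` and `b` in one component.
      obtain ⟨rfl, rfl⟩ := Prod.mk.inj heq
      exact absurd ⟨(ha.1.trans h.1).trans hb.2, (hb.1.trans h.2).trans ha.2⟩ hab
    · exact ⟨a', b', ha, hb, hmem⟩
  · rintro ⟨a', b', ha, hb, hmem⟩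
    exact ⟨a', b', ha, hb, Finset.mem_insert_of_mem hmem⟩

/-- An edge added inside a strongly connected component changes no level. -/
theorem level_insert {n : ℕ} {G : Network n} {i j : Fin n} (h : sameSCC G i j) (a : Fin n) :
    level (insert (i, j) G) a = level G a := by
  simp only [level, isSourceSCC, condArc_insert h, sameSCC_insert h.1]

theorem Nout_insert_self {n : ℕ} (G : Network n) (i j : Fin n) :
    Nout (insert (i, j) G) i = insert j (Nout G i) := by
  ext k; simp [Nout]

theorem Nout_insert_of_ne {n : ℕ} (G : Network n) {i j a : Fin n} (ha : a ≠ i) :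
    Nout (insert (i, j) G) a = Nout G a := by
  ext k; simp [Nout, ha]

theorem NinS_insert_source {n : ℕ} (G : Network n) {i j : Fin n} (hne : i ≠ j)
    (hji : (j, i) ∉ G) : NinS (insert (i, j) G) i = NinS G i := by
  ext k
  simp only [NinS, mem_filter, mem_univ, true_and, mem_insert, Prod.mk.injEq]
  grind

theorem NinS_insert_target {n : ℕ} (G : Network n) {i j : Fin n} (hne : i ≠ j)
    (hji : (j, i) ∉ G) : NinS (insert (i, j) G) j = insert i (NinS G j) := by
  ext k
  simp only [NinS, mem_filter, mem_univ, true_and, mem_insert, Prod.mk.injEq]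
  grind

/-- The new edge `ij` does not join two distinct nodes by an undirected edge, so it can only affect
`P_a(·, k)` through an edge leaving `k`, which is excluded by `k ≠ i`. -/
theorem Pset_insert {n : ℕ} (G : Network n) {i j : Fin n}
    (hji : (j, i) ∉ G) (a : Fin n) {k : Fin n} (hk : k ≠ i) :
    Pset (insert (i, j) G) a k = Pset G a k := by
  ext m
  simp only [Pset, mem_filter, mem_univ, true_and, mem_insert, Prod.mk.injEq]
  grind

/-- two non-adjacent nodes of the same SCC: `i` has an incentive to
establish `ij`, but a consensual `j` does not consent. -/
theorem stmt17 {n : ℕ} (hn : 3 ≤ n) (G : Network n) (hG : validNetwork G)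
    (i j : Fin n) (hne : i ≠ j) (hscc : sameSCC G i j)
    (hij : (i, j) ∉ G) (hji : (j, i) ∉ G)
    (γ c : ℝ) (H : ℕ → ℝ) (hpar : UtilityParams γ c H) :
    utility γ c H (insert (i, j) G) i - utility γ c H G i = γ ∧
    utility γ c H G i < utility γ c H (insert (i, j) G) i ∧
    utility γ c H (insert (i, j) G) j - utility γ c H G j =
      -c / ((Pset (insert (i, j) G) j i).card : ℝ) ∧
    utility γ c H (insert (i, j) G) j < utility γ c H G j := by
  obtain ⟨hγ, hc, -, -⟩ := hpar
  have hi : utility γ c H (insert (i, j) G) i - utility γ c H G i = γ := by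
    have hj : j ∉ Nout G i := by simpa [Nout] using hij
    have hsum : ∑ k ∈ NinS G i, (1 : ℝ) / ((Pset (insert (i, j) G) i k).card : ℝ) =
        ∑ k ∈ NinS G i, (1 : ℝ) / ((Pset G i k).card : ℝ) := by
      refine Finset.sum_congr rfl fun k hk => ?_
      have hki : k ≠ i := by
        rintro rfl
        simp [NinS] at hk
      rw [Pset_insert G hji i hki]
    simp only [utility, level_insert hscc, Nout_insert_self, NinS_insert_source G hne hji,
      Finset.card_insert_of_notMem hj, hsum]
    push_cast
    ring
  have hj : utility γ c H (insert (i, j) G) j - utility γ c H G j =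
      -c / ((Pset (insert (i, j) G) j i).card : ℝ) := by
    have hi' : i ∉ NinS G j := by simp [NinS, hij]
    have hsum : ∑ k ∈ NinS G j, (1 : ℝ) / ((Pset (insert (i, j) G) j k).card : ℝ) =
        ∑ k ∈ NinS G j, (1 : ℝ) / ((Pset G j k).card : ℝ) := by
      refine Finset.sum_congr rfl fun k hk => ?_
      have hki : k ≠ i := fun h => hi' (h ▸ hk)
      rw [Pset_insert G hji j hki]
    simp only [utility, level_insert hscc, Nout_insert_of_ne G hne.symm,
      NinS_insert_target G hne hji, Finset.sum_insert hi', hsum]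
    ring
  have hP : (0 : ℝ) < ((Pset (insert (i, j) G) j i).card : ℝ) := by
    exact_mod_cast Finset.card_pos.mpr ⟨j, Finset.mem_insert_self _ _⟩
  have hneg : -c / ((Pset (insert (i, j) G) j i).card : ℝ) < 0 :=
    div_neg_of_neg_of_pos (neg_neg_of_pos hc) hP
  exact ⟨hi, by linarith, hj, by linarith⟩

end
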